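/- arXiv:2601.22728 — 2 statements merged into one kernel-verified Lean document; each statement's English description precedes it below -/
import Mathlib

section
/- Let ε ∈ (0,1), let n ≥ 2 be an integer, and for i = 1, …, n let p_i = (i, (4/ε)^i) ∈ ℝ² (with the Euclidean metric). Let P = {p_1, …, p_n}. Then for every i ∈ {1, …, n−1} the pair ({p_1, …, p_i}, {p_{i+1}}) is (1/ε)-well-separated, and consequently the family of these n−1 pairs is a (1/ε)-WSPD of P of size n−1. -/
/-!
Write `K = 4/ε > 4`. The points `p₁, …, p_i` lie in a box of width at most `i ≤ K^i` and height at
most `K^i`, so they have diameter at most `2 K^i` (`dist_expPts_le`). The point `p_{i+1}` lies at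
least `K^(i+1) - K^i` above all of them, and `ε (K^(i+1) - K^i) = (4 - ε) K^i ≥ 3 K^i`
(`le_eps_mul_dist_expPts`); this gives well-separation (`isWellSeparated_initial`). Two points
`p_a, p_b` with `a < b` are covered by the pair `({p₁, …, p_{b-1}}, {p_b})`
(`pairDecomp_initial`), and the `n - 1` pairs are distinct because `i ↦ p_i` is injective.
-/

open scoped Classical

/-- `dmin A B` is the minimum distance between the nonempty finite sets `A` and `B`. -/
noncomputable def dmin {X : Type*} [MetricSpace X] (A B : Finset X) : ℝ :=
  sInf {r : ℝ | ∃ a ∈ A, ∃ b ∈ B, r = dist a b}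

/-- The diameter of a nonempty finite set. -/
noncomputable def fdiam {X : Type*} [MetricSpace X] (A : Finset X) : ℝ :=
  sSup {r : ℝ | ∃ x ∈ A, ∃ y ∈ A, r = dist x y}

/-- A pair `{A, B}` is `(1/ε)`-well-separated if `max(diam A, diam B) ≤ ε · d(A,B)`. -/
def IsWellSeparated {X : Type*} [MetricSpace X] (ε : ℝ) (A B : Finset X) : Prop :=
  max (fdiam A) (fdiam B) ≤ ε * dmin A B

/-- `W` is a pair decomposition of the finite set `P`. -/
def PairDecomp {X : Type*} (P : Finset X) (W : Finset (Finset X × Finset X)) : Prop :=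
  (∀ pr ∈ W, pr.1 ⊆ P ∧ pr.2 ⊆ P ∧ pr.1.Nonempty ∧ pr.2.Nonempty ∧ Disjoint pr.1 pr.2) ∧
  ∀ x ∈ P, ∀ y ∈ P, x ≠ y →
    ∃ pr ∈ W, (x ∈ pr.1 ∧ y ∈ pr.2) ∨ (x ∈ pr.2 ∧ y ∈ pr.1)

noncomputable def expPts (ε : ℝ) (i : ℕ) : EuclideanSpace ℝ (Fin 2) :=
  (WithLp.equiv 2 (Fin 2 → ℝ)).symm ![(i : ℝ), (4 / ε) ^ i]

theorem expPts_zero (ε : ℝ) (i : ℕ) : expPts ε i 0 = i := by simp [expPts]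

theorem expPts_one (ε : ℝ) (i : ℕ) : expPts ε i 1 = (4 / ε) ^ i := by simp [expPts]

theorem expPts_injective (ε : ℝ) : Function.Injective (expPts ε) := by
  intro i j h
  have h0 := congrArg (fun v : EuclideanSpace ℝ (Fin 2) => v 0) h
  simpa only [expPts_zero, Nat.cast_inj] using h0

theorem dist_expPts (ε : ℝ) (i j : ℕ) : dist (expPts ε i) (expPts ε j) =
    √(((i : ℝ) - j) ^ 2 + ((4 / ε) ^ i - (4 / ε) ^ j) ^ 2) := by
  rw [EuclideanSpace.dist_eq, Fin.sum_univ_two]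
  simp only [Real.dist_eq, sq_abs, expPts_zero, expPts_one]

theorem four_lt_base {ε : ℝ} (hε0 : 0 < ε) (hε1 : ε < 1) : 4 < 4 / ε := by
  rw [lt_div_iff₀ hε0]
  linarith

theorem nat_le_pow_base {ε : ℝ} (hε0 : 0 < ε) (hε1 : ε < 1) (i : ℕ) : (i : ℝ) ≤ (4 / ε) ^ i := by
  have h4 := four_lt_base hε0 hε1
  calc (i : ℝ) ≤ (2 : ℝ) ^ i := by exact_mod_cast Nat.lt_two_pow_self.le
    _ ≤ (4 / ε) ^ i := by gcongr; linarith

/-- The horizontal spread of `p₁, …, p_i` is at most `i ≤ (4/ε)^i` and the vertical spread at most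
`(4/ε)^i`. -/
theorem dist_expPts_le {ε : ℝ} (hε0 : 0 < ε) (hε1 : ε < 1) {i a b : ℕ} (ha : a ≤ i) (hb : b ≤ i) :
    dist (expPts ε a) (expPts ε b) ≤ 2 * (4 / ε) ^ i := by
  have h4 := four_lt_base hε0 hε1
  have hi := nat_le_pow_base hε0 hε1 i
  have hpa : (4 / ε) ^ a ≤ (4 / ε) ^ i := pow_le_pow_right₀ (by linarith) ha
  have hpb : (4 / ε) ^ b ≤ (4 / ε) ^ i := pow_le_pow_right₀ (by linarith) hb
  have ha0 : 0 < (4 / ε) ^ a := by positivity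
  have hb0 : 0 < (4 / ε) ^ b := by positivity
  have ha' : (a : ℝ) ≤ i := by exact_mod_cast ha
  have hb' : (b : ℝ) ≤ i := by exact_mod_cast hb
  have hx : ((a : ℝ) - b) ^ 2 ≤ ((4 / ε) ^ i) ^ 2 := by
    apply sq_le_sq'
    · linarith [Nat.cast_nonneg (α := ℝ) a]
    · linarith [Nat.cast_nonneg (α := ℝ) b]
  have hy : ((4 / ε) ^ a - (4 / ε) ^ b) ^ 2 ≤ ((4 / ε) ^ i) ^ 2 := by
    apply sq_le_sq' <;> linarith
  rw [dist_expPts]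
  apply Real.sqrt_le_iff.2 ⟨by positivity, ?_⟩
  nlinarith [sq_nonneg ((4 / ε) ^ i)]

/-- The vertical gap below `p_{i+1}` is at least `(4/ε)^(i+1) - (4/ε)^i = (4/ε - 1) (4/ε)^i`, and
multiplying by `ε` leaves a factor `4 - ε > 3`. -/
theorem le_eps_mul_dist_expPts {ε : ℝ} (hε0 : 0 < ε) (hε1 : ε < 1) {i a : ℕ} (ha : a ≤ i) :
    3 * (4 / ε) ^ i ≤ ε * dist (expPts ε a) (expPts ε (i + 1)) := by
  have h4 := four_lt_base hε0 hε1
  have hpa : (4 / ε) ^ a ≤ (4 / ε) ^ i := pow_le_pow_right₀ (by linarith) ha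
  have hi0 : 0 < (4 / ε) ^ i := by positivity
  have hgap : (4 / ε) ^ (i + 1) - (4 / ε) ^ a ≤ dist (expPts ε a) (expPts ε (i + 1)) := by
    rw [dist_expPts]
    apply Real.le_sqrt_of_sq_le
    nlinarith [sq_nonneg ((a : ℝ) - (i + 1 : ℕ))]
  have hmul : ε * (4 / ε) ^ (i + 1) = 4 * (4 / ε) ^ i := by
    rw [pow_succ]
    field_simp
  calc 3 * (4 / ε) ^ i ≤ ε * ((4 / ε) ^ (i + 1) - (4 / ε) ^ a) := by
        rw [mul_sub, hmul]
        nlinarith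
    _ ≤ _ := by gcongr

theorem fdiam_le {X : Type*} [MetricSpace X] {A : Finset X} (hA : A.Nonempty) {c : ℝ}
    (h : ∀ x ∈ A, ∀ y ∈ A, dist x y ≤ c) : fdiam A ≤ c := by
  obtain ⟨x, hx⟩ := hA
  refine csSup_le ⟨_, x, hx, x, hx, rfl⟩ ?_
  rintro r ⟨x, hx, y, hy, rfl⟩
  exact h x hx y hy

theorem le_dmin {X : Type*} [MetricSpace X] {A B : Finset X} (hA : A.Nonempty) (hB : B.Nonempty)
    {c : ℝ} (h : ∀ x ∈ A, ∀ y ∈ B, c ≤ dist x y) : c ≤ dmin A B := by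
  obtain ⟨x, hx⟩ := hA
  obtain ⟨y, hy⟩ := hB
  refine le_csInf ⟨_, x, hx, y, hy, rfl⟩ ?_
  rintro r ⟨x, hx, y, hy, rfl⟩
  exact h x hx y hy

theorem image_Icc_nonempty (ε : ℝ) {i : ℕ} (hi : 1 ≤ i) :
    ((Finset.Icc 1 i).image (expPts ε)).Nonempty :=
  (Finset.nonempty_Icc.2 hi).image _

theorem disjoint_initial (ε : ℝ) (i : ℕ) :
    Disjoint ((Finset.Icc 1 i).image (expPts ε)) ({expPts ε (i + 1)} : Finset _) := by
  rw [Finset.disjoint_singleton_right, Finset.mem_image]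
  rintro ⟨a, ha, h⟩
  have := expPts_injective ε h
  have := (Finset.mem_Icc.1 ha).2
  omega

theorem isWellSeparated_initial {ε : ℝ} (hε0 : 0 < ε) (hε1 : ε < 1) {i : ℕ} (hi : 1 ≤ i) :
    IsWellSeparated ε ((Finset.Icc 1 i).image (expPts ε)) {expPts ε (i + 1)} := by
  have hpos : 0 < (4 / ε) ^ i := by positivity
  have hne := image_Icc_nonempty ε hi
  have hdist : 3 * (4 / ε) ^ i ≤
      ε * dmin ((Finset.Icc 1 i).image (expPts ε)) {expPts ε (i + 1)} := by
    rw [mul_comm ε, ← div_le_iff₀ hε0]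
    refine le_dmin hne (Finset.singleton_nonempty _) fun x hx y hy => ?_
    obtain ⟨a, ha, rfl⟩ := Finset.mem_image.1 hx
    rw [Finset.mem_singleton.1 hy, div_le_iff₀ hε0, mul_comm _ ε]
    exact le_eps_mul_dist_expPts hε0 hε1 (Finset.mem_Icc.1 ha).2
  have hdiam : fdiam ((Finset.Icc 1 i).image (expPts ε)) ≤ 2 * (4 / ε) ^ i := by
    refine fdiam_le hne fun x hx y hy => ?_
    obtain ⟨a, ha, rfl⟩ := Finset.mem_image.1 hx
    obtain ⟨b, hb, rfl⟩ := Finset.mem_image.1 hy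
    exact dist_expPts_le hε0 hε1 (Finset.mem_Icc.1 ha).2 (Finset.mem_Icc.1 hb).2
  have hsingle : fdiam ({expPts ε (i + 1)} : Finset _) ≤ 0 := by
    refine fdiam_le (Finset.singleton_nonempty _) fun x hx y hy => ?_
    rw [Finset.mem_singleton.1 hx, Finset.mem_singleton.1 hy, dist_self]
  exact max_le (by linarith) (by linarith)

theorem pairDecomp_initial (ε : ℝ) (n : ℕ) :
    PairDecomp ((Finset.Icc 1 n).image (expPts ε))
        ((Finset.Icc 1 (n - 1)).image
          (fun i => (((Finset.Icc 1 i).image (expPts ε)),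
                     ({expPts ε (i + 1)} : Finset (EuclideanSpace ℝ (Fin 2)))))) := by
  -- The pair of points `p_a, p_b` with `a < b` is separated by the pair of sets of index `b - 1`.
  have key : ∀ a b : ℕ, 1 ≤ a → a < b → b ≤ n →
      b - 1 ∈ Finset.Icc 1 (n - 1) ∧ expPts ε a ∈ (Finset.Icc 1 (b - 1)).image (expPts ε) ∧
      expPts ε b ∈ ({expPts ε (b - 1 + 1)} : Finset (EuclideanSpace ℝ (Fin 2))) := by
    intro a b ha hab hb
    refine ⟨Finset.mem_Icc.2 (by omega),
      Finset.mem_image_of_mem _ (Finset.mem_Icc.2 (by omega)), ?_⟩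
    rw [Nat.sub_add_cancel (by omega), Finset.mem_singleton]
  constructor
  · intro pr hpr
    obtain ⟨i, hi, rfl⟩ := Finset.mem_image.1 hpr
    rw [Finset.mem_Icc] at hi
    refine ⟨Finset.image_subset_image (Finset.Icc_subset_Icc_right (by omega)), ?_,
      image_Icc_nonempty ε hi.1, Finset.singleton_nonempty _, disjoint_initial ε i⟩
    exact Finset.singleton_subset_iff.2
      (Finset.mem_image_of_mem _ (Finset.mem_Icc.2 (by omega)))
  · intro x hx y hy hxy
    obtain ⟨a, ha, rfl⟩ := Finset.mem_image.1 hx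
    obtain ⟨b, hb, rfl⟩ := Finset.mem_image.1 hy
    rw [Finset.mem_Icc] at ha hb
    rcases lt_trichotomy a b with h | h | h
    · obtain ⟨h1, h2, h3⟩ := key a b ha.1 h hb.2
      exact ⟨_, Finset.mem_image_of_mem _ h1, Or.inl ⟨h2, h3⟩⟩
    · exact absurd (congrArg _ h) hxy
    · obtain ⟨h1, h2, h3⟩ := key b a hb.1 h ha.2
      exact ⟨_, Finset.mem_image_of_mem _ h1, Or.inr ⟨h3, h2⟩⟩

theorem stmt6 (ε : ℝ) (hε0 : 0 < ε) (hε1 : ε < 1) (n : ℕ) (hn : 2 ≤ n) :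
    (∀ i : ℕ, 1 ≤ i → i ≤ n - 1 →
      Disjoint ((Finset.Icc 1 i).image (expPts ε)) ({expPts ε (i + 1)} : Finset _) ∧
      IsWellSeparated ε ((Finset.Icc 1 i).image (expPts ε)) {expPts ε (i + 1)}) ∧
    (PairDecomp ((Finset.Icc 1 n).image (expPts ε))
        ((Finset.Icc 1 (n - 1)).image
          (fun i => (((Finset.Icc 1 i).image (expPts ε)),
                     ({expPts ε (i + 1)} : Finset (EuclideanSpace ℝ (Fin 2)))))) ∧
      (∀ pr ∈ ((Finset.Icc 1 (n - 1)).image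
          (fun i => (((Finset.Icc 1 i).image (expPts ε)),
                     ({expPts ε (i + 1)} : Finset (EuclideanSpace ℝ (Fin 2)))))),
        IsWellSeparated ε pr.1 pr.2) ∧
      ((Finset.Icc 1 (n - 1)).image
          (fun i => (((Finset.Icc 1 i).image (expPts ε)),
                     ({expPts ε (i + 1)} : Finset (EuclideanSpace ℝ (Fin 2)))))).card = n - 1) := by
  refine ⟨fun i hi _ => ⟨disjoint_initial ε i, isWellSeparated_initial hε0 hε1 hi⟩,
    pairDecomp_initial ε n, ?_, ?_⟩
  · intro pr hpr
    obtain ⟨i, hi, rfl⟩ := Finset.mem_image.1 hpr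
    exact isWellSeparated_initial hε0 hε1 (Finset.mem_Icc.1 hi).1
  · -- The second components are distinct singletons, so no two of the pairs coincide.
    rw [Finset.card_image_of_injective, Nat.card_Icc, Nat.add_sub_cancel]
    intro i j h
    have h2 := Finset.singleton_injective (congrArg Prod.snd h)
    exact Nat.succ_injective (expPts_injective ε h2)
end

section
/- Let n ≥ 1 be an integer, let δ = min(1/(4n), 10⁻⁵) and τ = δ/n. Let P ⊆ ℝ² be a finite set with |P| = n and diam(P) ≤ 2n (Euclidean metric), and let p ∈ ℝ² satisfy min_{q∈P} dist(p,q) = n/δ. Then for every nonempty X ⊆ P: (i) if diam(X) ≤ 1 then diam(X) ≤ τ · d({p}, X), i.e., the pair {{p}, X} is (1/τ)-well-separated; and (ii) if diam(X) ≥ 1.969 then diam(X) > 1.96 · τ · d({p}, X). -/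
section Aux

variable {X : Type*} [MetricSpace X]

lemma dist_set_finite (A B : Finset X) :
    {r : ℝ | ∃ a ∈ A, ∃ b ∈ B, r = dist a b}.Finite := by
  refine ((A ×ˢ B).finite_toSet.image fun z : X × X => dist z.1 z.2).subset ?_
  rintro r ⟨a, ha, b, hb, rfl⟩
  exact ⟨(a, b), by simp [ha, hb], rfl⟩

lemma dmin_le_dist {A B : Finset X} {a b : X} (ha : a ∈ A) (hb : b ∈ B) :
    dmin A B ≤ dist a b :=
  csInf_le (dist_set_finite A B).bddBelow ⟨a, ha, b, hb, rfl⟩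

lemma exists_dmin_eq_dist {A B : Finset X} (hA : A.Nonempty) (hB : B.Nonempty) :
    ∃ a ∈ A, ∃ b ∈ B, dmin A B = dist a b := by
  obtain ⟨a, ha⟩ := hA
  obtain ⟨b, hb⟩ := hB
  have hne : {r : ℝ | ∃ a ∈ A, ∃ b ∈ B, r = dist a b}.Nonempty := ⟨_, a, ha, b, hb, rfl⟩
  obtain ⟨a', ha', b', hb', h⟩ := hne.csInf_mem (dist_set_finite A B)
  exact ⟨a', ha', b', hb', h⟩

lemma dist_le_fdiam {A : Finset X} {x y : X} (hx : x ∈ A) (hy : y ∈ A) :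
    dist x y ≤ fdiam A :=
  le_csSup (dist_set_finite A A).bddAbove ⟨x, hx, y, hy, rfl⟩

end Aux

theorem stmt16 (n : ℕ) (hn : 1 ≤ n) (δ τ : ℝ)
    (hδ : δ = min (1 / (4 * (n : ℝ))) (1 / 100000)) (hτ : τ = δ / n)
    (P : Finset (EuclideanSpace ℝ (Fin 2))) (hcard : P.card = n)
    (hdiam : fdiam P ≤ 2 * n)
    (p : EuclideanSpace ℝ (Fin 2)) (hp : dmin {p} P = n / δ) :
    ∀ X : Finset (EuclideanSpace ℝ (Fin 2)), X ⊆ P → X.Nonempty →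
      (fdiam X ≤ 1 → fdiam X ≤ τ * dmin {p} X) ∧
      ((1.969 : ℝ) ≤ fdiam X → 1.96 * τ * dmin {p} X < fdiam X) := by
  intro X hXP hX
  have hn0 : (0 : ℝ) < n := by exact_mod_cast hn
  have hδ0 : 0 < δ := by rw [hδ]; positivity
  have hδ1 : δ ≤ 1 / 100000 := hδ ▸ min_le_right _ _
  have hτ0 : 0 < τ := by rw [hτ]; positivity
  have hτ1 : τ * (n / δ) = 1 := by rw [hτ]; field_simp
  have hτn : τ * n = δ := by rw [hτ]; field_simp
  obtain ⟨p₁, hp₁, x, hx, hdx⟩ := exists_dmin_eq_dist (Finset.singleton_nonempty p) hX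
  obtain ⟨p₂, hp₂, q, hq, hdq⟩ :=
    exists_dmin_eq_dist (Finset.singleton_nonempty p) (hX.mono hXP)
  rw [Finset.mem_singleton] at hp₁ hp₂
  subst p₁ p₂
  constructor
  · intro h
    have hlow : n / δ ≤ dmin {p} X := by
      rw [← hp, hdx]
      exact dmin_le_dist (Finset.mem_singleton_self p) (hXP hx)
    calc fdiam X ≤ τ * (n / δ) := by rw [hτ1]; exact h
      _ ≤ τ * dmin {p} X := by gcongr
  · intro h
    have hup : dmin {p} X ≤ n / δ + 2 * n := by
      rw [← hp, hdq, hdx]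
      exact (dist_triangle p q x).trans
        (add_le_add_right ((dist_le_fdiam hq (hXP hx)).trans hdiam) _)
    have hmul : τ * dmin {p} X ≤ 1 + 2 * δ := by
      calc τ * dmin {p} X ≤ τ * (n / δ + 2 * n) := by gcongr
        _ = 1 + 2 * δ := by linear_combination hτ1 + 2 * hτn
    rw [mul_assoc]
    linarith
end
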